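/- arXiv:2505.08023 — 2 statements merged into one kernel-verified Lean document; each statement's English description precedes it below -/
import Mathlib

section
/- Let λ > 0 and let r, ℓ : [0,T) × ℝ → ℝ be a C¹ solution of the diagonal system with initial data r(0,·) = r₀ = −ℓ(0,·), where r₀ is bounded and C¹, the limit r₀(+∞) := lim_{x→+∞} r₀(x) exists and is finite, and |r(t,x) − ℓ(t,y)| ≤ 2·sup|r₀| for all t, x, y. Assume the characteristic flows x₁, x₂ and the correspondence map β(t,α) (determined by x₁(t,α) = x₂(t, β(t,α))) exist and are C¹. Suppose α ∈ ℝ satisfies: r₀'(α)·(r₀(α) + r₀(+∞)) < 0 and r₀'(x)·r₀(α) < 0 for every x ≥ α. Then along the forward characteristic x₁(·,α), for every t ∈ [0,T): if r₀(α) > 0 then η_L(t,α) ≤ η(t, x₁(t,α)) ≤ η_U(t,α), while if r₀(α) < 0 then η_U(t,α) ≤ η(t, x₁(t,α)) ≤ η_L(t,α). -/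
open Real Set Filter MeasureTheory

noncomputable section

/-- `L(u) = (1/2)(u·√(1+u²) + arcsinh u)`, the antiderivative of `Q(ξ) = √(1+ξ²)` with `L 0 = 0`. -/
def Lfun (u : ℝ) : ℝ := (1/2) * (u * Real.sqrt (1 + u^2) + Real.arsinh u)

/-- `û₁(η) = L⁻¹(−η/2)`. -/
def u1hat (η : ℝ) : ℝ := Function.invFun Lfun (-η/2)

/-- `k(η) = √(1 + û₁(η)²)`. -/
def kfun (η : ℝ) : ℝ := Real.sqrt (1 + (u1hat η)^2)

/-- `f(η) = k'(η)/√(k(η))`. -/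
def ffun (η : ℝ) : ℝ := deriv kfun η / Real.sqrt (kfun η)

/-- `A(t) = exp(λ t / 2)`. -/
def Afun (lam t : ℝ) : ℝ := Real.exp (lam * t / 2)

/-- `η(t,x) = r(t,x) − ℓ(t,x)`. -/
def etafun (r l : ℝ → ℝ → ℝ) (t x : ℝ) : ℝ := r t x - l t x

/-- Weighted Riemann derivative `p(t,x) = A(t)·√(k(η(t,x)))·∂ₓr(t,x)`. -/
def pfun (lam : ℝ) (r l : ℝ → ℝ → ℝ) (t x : ℝ) : ℝ :=
  Afun lam t * Real.sqrt (kfun (etafun r l t x)) * deriv (fun y => r t y) x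

/-- Weighted Riemann derivative `q(t,x) = A(t)·√(k(η(t,x)))·∂ₓℓ(t,x)`. -/
def qfun (lam : ℝ) (r l : ℝ → ℝ → ℝ) (t x : ℝ) : ℝ :=
  Afun lam t * Real.sqrt (kfun (etafun r l t x)) * deriv (fun y => l t y) x

lemma aux_left_deriv {φ : ℝ → ℝ} {d s : ℝ} (h : HasDerivAt φ d s)
    (hev : ∀ᶠ τ in nhdsWithin s (Set.Iio s), φ τ ≤ φ s) : 0 ≤ d := by
  have h1 := (hasDerivAt_iff_tendsto_slope_left_right.mp h).1
  refine ge_of_tendsto h1 ?_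
  filter_upwards [hev, self_mem_nhdsWithin] with τ h2 h3
  have h3' : τ < s := h3
  rw [slope_def_field]
  exact div_nonneg_of_nonpos (by linarith) (by linarith)

lemma aux_left_lt {φ : ℝ → ℝ} {d s : ℝ} (h : HasDerivAt φ d s) (hd : 0 < d) (h0 : φ s ≤ 0) :
    ∀ᶠ τ in nhdsWithin s (Set.Iio s), φ τ ≤ 0 := by
  have h1 := (hasDerivAt_iff_tendsto_slope_left_right.mp h).1
  filter_upwards [h1.eventually (lt_mem_nhds hd), self_mem_nhdsWithin] with τ h2 h3
  have h3' : τ < s := h3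
  rw [slope_def_field] at h2
  by_contra hc
  push Not at hc
  have : (φ s - φ τ) / (s - τ) ≤ 0 := div_nonpos_of_nonpos_of_nonneg (by linarith) (by linarith)
  have e : (φ τ - φ s) / (τ - s) = (φ s - φ τ) / (s - τ) := by
    rw [← neg_sub (φ s), ← neg_sub s, neg_div_neg_eq]
  rw [e] at h2
  linarith

lemma aux_curve (X Y K : ℝ → ℝ) (hK : ∀ x, 0 < K x) (s x : ℝ)
    (hX : HasDerivAt X (K (X s)) s) (hY : HasDerivAt Y (-(K (Y s))) s)
    (h1 : X s ≤ x) (h2 : x ≤ Y s) :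
    ∃ γ : ℝ → ℝ, γ s = x ∧ HasDerivAt γ (K x) s ∧
      ∀ᶠ τ in nhdsWithin s (Set.Iio s), X τ ≤ γ τ ∧ γ τ ≤ Y τ := by
  obtain ⟨γ, e, hγ, hev⟩ : ∃ γ : ℝ → ℝ, γ s = x ∧ HasDerivAt γ (K x) s ∧
      ∀ᶠ τ in nhdsWithin s (Set.Iio s), X τ ≤ γ τ := by
    rcases h1.eq_or_lt with h | h
    · refine ⟨X, h, h ▸ hX, Eventually.of_forall fun _ => le_rfl⟩
    · have hg : HasDerivAt (fun τ => x + K x * (τ - s)) (K x) s := by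
        simpa using (((hasDerivAt_id s).sub_const s).const_mul (K x)).const_add x
      refine ⟨_, by simp, hg, ?_⟩
      have := (hX.continuousAt.eventually_lt hg.continuousAt (by simpa using h))
      exact (this.filter_mono nhdsWithin_le_nhds).mono fun _ h => h.le
  refine ⟨γ, e, hγ, ?_⟩
  have := aux_left_lt (hγ.sub hY) (by have := hK x; have := hK (Y s); linarith)
    (by simp [e, h2])
  filter_upwards [hev, this] with τ a b
  refine ⟨a, by simpa using b⟩

lemma aux_curve_back (X Y K : ℝ → ℝ) (hK : ∀ x, 0 < K x) (s x : ℝ)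
    (hX : HasDerivAt X (K (X s)) s) (hY : HasDerivAt Y (-(K (Y s))) s)
    (h1 : X s ≤ x) (h2 : x ≤ Y s) :
    ∃ γ : ℝ → ℝ, γ s = x ∧ HasDerivAt γ (-(K x)) s ∧
      ∀ᶠ τ in nhdsWithin s (Set.Iio s), X τ ≤ γ τ ∧ γ τ ≤ Y τ := by
  obtain ⟨γ, e, hγ, hev⟩ := aux_curve (fun τ => -Y τ) (fun τ => -X τ) (fun y => K (-y))
    (fun y => hK _) s (-x) (by simpa using hY.fun_neg) (by simpa using hX.fun_neg)
    (by simpa using h2) (by simpa using h1)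
  refine ⟨fun τ => -γ τ, by simp [e], by simpa using hγ.fun_neg, ?_⟩
  filter_upwards [hev] with τ h
  constructor <;> linarith [h.1, h.2]

lemma aux_chain {r : ℝ → ℝ → ℝ} {γ : ℝ → ℝ} {s k : ℝ} {r' : ℝ × ℝ →L[ℝ] ℝ}
    (hr : HasFDerivAt (Function.uncurry r) r' (s, γ s)) (hγ : HasDerivAt γ k s) :
    HasDerivAt (fun τ => r τ (γ τ)) (r' (1, k)) s :=
  HasFDerivAt.comp_hasDerivAt (f := fun τ => (τ, γ τ)) s hr ((hasDerivAt_id s).prodMk hγ)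

/-- Maximum principle on the domain of dependence. -/
lemma aux_max (lam t M : ℝ) (hlam : 0 < lam)
    (r m K : ℝ → ℝ → ℝ) (X Y : ℝ → ℝ) (hK : ∀ s x, 0 < K s x)
    (hX : ∀ s ∈ Set.Icc 0 t, HasDerivAt X (K s (X s)) s)
    (hY : ∀ s ∈ Set.Icc 0 t, HasDerivAt Y (-(K s (Y s))) s)
    (hrc : ContinuousOn (Function.uncurry r) (Set.Icc 0 t ×ˢ Set.univ))
    (hmc : ContinuousOn (Function.uncurry m) (Set.Icc 0 t ×ˢ Set.univ))
    (hr : ∀ s ∈ Set.Ioc 0 t, ∀ x, ∃ r' : ℝ × ℝ →L[ℝ] ℝ,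
      HasFDerivAt (Function.uncurry r) r' (s, x) ∧ r' (1, K s x) = -(lam/2) * (r s x - m s x))
    (hm : ∀ s ∈ Set.Ioc 0 t, ∀ x, ∃ m' : ℝ × ℝ →L[ℝ] ℝ,
      HasFDerivAt (Function.uncurry m) m' (s, x) ∧ m' (1, -(K s x)) = -(lam/2) * (m s x - r s x))
    (hr0 : ∀ x, X 0 ≤ x → x ≤ Y 0 → r 0 x ≤ M)
    (hm0 : ∀ x, X 0 ≤ x → x ≤ Y 0 → m 0 x ≤ M) :
    ∀ s ∈ Set.Icc 0 t, ∀ x, X s ≤ x → x ≤ Y s → r s x ≤ M ∧ m s x ≤ M := by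
  intro s hs x hx1 hx2
  suffices h : ∀ ε > 0, max (r s x) (m s x) - ε * s ≤ M by
    have hmax : max (r s x) (m s x) ≤ M := by
      have ht : Tendsto (fun ε : ℝ => max (r s x) (m s x) - ε * s) (nhdsWithin 0 (Set.Ioi 0))
          (nhds (max (r s x) (m s x) - 0 * s)) :=
        (Continuous.tendsto (by fun_prop) 0).mono_left nhdsWithin_le_nhds
      have := le_of_tendsto ht (by filter_upwards [self_mem_nhdsWithin] with ε he using h ε he)
      simpa using this
    exact ⟨(le_max_left _ _).trans hmax, (le_max_right _ _).trans hmax⟩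
  intro ε hε
  have hXc : ContinuousOn X (Set.Icc 0 t) := fun s hs => (hX s hs).continuousAt.continuousWithinAt
  have hYc : ContinuousOn Y (Set.Icc 0 t) := fun s hs => (hY s hs).continuousAt.continuousWithinAt
  set D : Set (ℝ × ℝ) := {p | p.1 ∈ Set.Icc 0 t ∧ X p.1 ≤ p.2 ∧ p.2 ≤ Y p.1} with hD
  have hDcomp : IsCompact D := by
    have hf : ContinuousOn (fun q : ℝ × ℝ => (q.1, X q.1 + q.2 * (Y q.1 - X q.1)))
        (Set.Icc 0 t ×ˢ Set.Icc 0 1) := by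
      have hX' : ContinuousOn (fun q : ℝ × ℝ => X q.1) (Set.Icc 0 t ×ˢ Set.Icc (0:ℝ) 1) :=
        hXc.comp continuousOn_fst (fun q hq => hq.1)
      have hY' : ContinuousOn (fun q : ℝ × ℝ => Y q.1) (Set.Icc 0 t ×ˢ Set.Icc (0:ℝ) 1) :=
        hYc.comp continuousOn_fst (fun q hq => hq.1)
      exact continuousOn_fst.prodMk (hX'.add (continuousOn_snd.mul (hY'.sub hX')))
    have hc := (isCompact_Icc.prod isCompact_Icc).image_of_continuousOn hf
    have hc2 : IsCompact (((fun q : ℝ × ℝ => (q.1, X q.1 + q.2 * (Y q.1 - X q.1))) ''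
        (Set.Icc 0 t ×ˢ Set.Icc 0 1)) ∩ D) := by
      have : ((fun q : ℝ × ℝ => (q.1, X q.1 + q.2 * (Y q.1 - X q.1))) ''
        (Set.Icc 0 t ×ˢ Set.Icc 0 1)) ∩ D = (fun q : ℝ × ℝ => (q.1, X q.1 + q.2 * (Y q.1 - X q.1))) ''
        ({τ ∈ Set.Icc 0 t | X τ ≤ Y τ} ×ˢ Set.Icc 0 1) := by
        ext p
        constructor
        · rintro ⟨⟨q, hq, rfl⟩, h⟩
          exact ⟨q, ⟨⟨hq.1, h.2.1.trans h.2.2⟩, hq.2⟩, rfl⟩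
        · rintro ⟨q, ⟨⟨h1, h2⟩, h3, h4⟩, rfl⟩
          refine ⟨⟨q, ⟨h1, h3, h4⟩, rfl⟩, h1, ?_, ?_⟩ <;> simp only <;> nlinarith
      rw [this]
      have hcl : IsCompact {τ ∈ Set.Icc 0 t | X τ ≤ Y τ} :=
        isCompact_Icc.of_isClosed_subset (isClosed_Icc.isClosed_le hXc hYc) (fun _ h => h.1)
      exact (hcl.prod isCompact_Icc).image_of_continuousOn
        (hf.mono (Set.prod_mono (fun _ h => h.1) le_rfl))
    convert hc2 using 1
    symm
    apply Set.inter_eq_right.mpr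
    rintro ⟨a, y⟩ ⟨h1, h2, h3⟩
    simp only at h1 h2 h3
    rcases (h2.trans h3).eq_or_lt with h | h
    · refine ⟨(a, 0), ⟨h1, by simp⟩, ?_⟩
      simp only [Prod.mk.injEq, true_and]
      linarith
    · have hp : 0 < Y a - X a := by linarith
      refine ⟨(a, (y - X a) / (Y a - X a)), ⟨h1, div_nonneg (by linarith) hp.le,
        (div_le_one hp).mpr (by linarith)⟩, ?_⟩
      simp only [Prod.mk.injEq, true_and]
      field_simp
      ring
  have hDsub : D ⊆ Set.Icc 0 t ×ˢ Set.univ := fun p hp => ⟨hp.1, trivial⟩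
  have hFc : ContinuousOn (fun p : ℝ × ℝ => max (r p.1 p.2) (m p.1 p.2) - ε * p.1) D :=
    (ContinuousOn.sup (hrc.mono hDsub) (hmc.mono hDsub)).sub (continuousOn_const.mul continuousOn_fst)
  obtain ⟨⟨a, y⟩, hp, hmax⟩ := hDcomp.exists_isMaxOn ⟨(s, x), hs, hx1, hx2⟩ hFc
  have hmax' : ∀ τ z, τ ∈ Set.Icc 0 t → X τ ≤ z → z ≤ Y τ →
      max (r τ z) (m τ z) - ε * τ ≤ max (r a y) (m a y) - ε * a :=
    fun τ z h1 h2 h3 => hmax (show (τ, z) ∈ D from ⟨h1, h2, h3⟩)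
  obtain ⟨ha, hy1, hy2⟩ := hp
  simp only at ha hy1 hy2
  refine (hmax' s x hs hx1 hx2).trans ?_
  rcases ha.1.eq_or_lt with h0 | h0
  · subst h0
    simpa using ⟨hr0 y hy1 hy2, hm0 y hy1 hy2⟩
  exfalso
  have hleft : ∀ᶠ τ in nhdsWithin a (Set.Iio a), τ ∈ Set.Icc 0 t := by
    filter_upwards [Ioo_mem_nhdsLT h0] with τ h
    exact ⟨h.1.le, h.2.le.trans ha.2⟩
  rcases le_total (m a y) (r a y) with hle | hle
  · obtain ⟨γ, e, hγ, hev⟩ := aux_curve X Y (K a) (hK a) a y (hX a ha) (hY a ha) hy1 hy2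
    obtain ⟨r', h1, h2⟩ := hr a ⟨h0, ha.2⟩ y
    have hd := (aux_chain (by rw [e]; exact h1) hγ).fun_sub ((hasDerivAt_id a).const_mul ε)
    have := aux_left_deriv hd (by
      filter_upwards [hev, hleft] with τ b c
      have := hmax' τ (γ τ) c b.1 b.2
      rw [max_eq_left hle] at this
      simp only [e, id]
      linarith [le_max_left (r τ (γ τ)) (m τ (γ τ))])
    rw [h2] at this
    nlinarith
  · obtain ⟨γ, e, hγ, hev⟩ := aux_curve_back X Y (K a) (hK a) a y (hX a ha) (hY a ha) hy1 hy2
    obtain ⟨r', h1, h2⟩ := hm a ⟨h0, ha.2⟩ y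
    have hd := (aux_chain (by rw [e]; exact h1) hγ).fun_sub ((hasDerivAt_id a).const_mul ε)
    have := aux_left_deriv hd (by
      filter_upwards [hev, hleft] with τ b c
      have := hmax' τ (γ τ) c b.1 b.2
      rw [max_eq_right hle] at this
      simp only [e, id]
      linarith [le_max_right (r τ (γ τ)) (m τ (γ τ))])
    rw [h2] at this
    nlinarith

lemma aux_growth (lam t M : ℝ) (hlam : 0 < lam) (ht : 0 ≤ t) (f g : ℝ → ℝ)
    (hf : ContinuousOn f (Set.Icc 0 t))
    (hd : ∀ s ∈ Set.Ioc 0 t, HasDerivAt f (-(lam/2) * (f s - g s)) s)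
    (hg : ∀ s ∈ Set.Icc 0 t, g s ≤ M) :
    Afun lam t * f t ≤ f 0 + M * (Afun lam t - 1) := by
  have hA : ∀ s, HasDerivAt (Afun lam) (lam / 2 * Afun lam s) s := by
    intro s
    have := (((hasDerivAt_id s).const_mul lam).div_const 2).exp
    have e : lam / 2 * Afun lam s = rexp (lam * id s / 2) * (lam * 1 / 2) := by
      simp only [Afun, id]; ring
    rw [e]
    exact this
  have hd' : ∀ s ∈ Set.Ioc 0 t, HasDerivAt (fun s => Afun lam s * (f s - M))
      (lam / 2 * Afun lam s * (f s - M) + Afun lam s * (-(lam/2) * (f s - g s))) s :=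
    fun s hs => (hA s).mul ((hd s hs).sub_const M)
  have hanti : AntitoneOn (fun s => Afun lam s * (f s - M)) (Set.Icc 0 t) := by
    apply antitoneOn_of_deriv_nonpos (convex_Icc 0 t)
    · have hAc : ContinuousOn (Afun lam) (Set.Icc 0 t) :=
        fun s _ => (hA s).continuousAt.continuousWithinAt
      exact hAc.mul (hf.sub continuousOn_const)
    · rw [interior_Icc]
      exact fun s hs => (hd' s ⟨hs.1, hs.2.le⟩).differentiableAt.differentiableWithinAt
    · rw [interior_Icc]
      intro s hs
      rw [(hd' s ⟨hs.1, hs.2.le⟩).deriv]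
      have h1 := hg s ⟨hs.1.le, hs.2.le⟩
      have h2 : 0 < Afun lam s := Real.exp_pos _
      have : 0 ≤ lam / 2 * Afun lam s * (M - g s) := by
        apply mul_nonneg (by positivity) (by linarith)
      linarith
  have := hanti (Set.left_mem_Icc.mpr ht) (Set.right_mem_Icc.mpr ht) ht
  have h0 : Afun lam 0 = 1 := by simp [Afun]
  simp only [h0] at this
  linarith

lemma aux_upper (lam t M : ℝ) (hlam : 0 < lam) (ht : 0 ≤ t)
    (r m K : ℝ → ℝ → ℝ) (X Y : ℝ → ℝ) (hK : ∀ s x, 0 < K s x)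
    (hX : ∀ s ∈ Set.Icc 0 t, HasDerivAt X (K s (X s)) s)
    (hY : ∀ s ∈ Set.Icc 0 t, HasDerivAt Y (-(K s (Y s))) s)
    (hXY : ∀ s ∈ Set.Icc 0 t, X s ≤ Y s)
    (hrc : ContinuousOn (Function.uncurry r) (Set.Icc 0 t ×ˢ Set.univ))
    (hmc : ContinuousOn (Function.uncurry m) (Set.Icc 0 t ×ˢ Set.univ))
    (hr : ∀ s ∈ Set.Ioc 0 t, ∀ x, ∃ r' : ℝ × ℝ →L[ℝ] ℝ,
      HasFDerivAt (Function.uncurry r) r' (s, x) ∧ r' (1, K s x) = -(lam/2) * (r s x - m s x))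
    (hm : ∀ s ∈ Set.Ioc 0 t, ∀ x, ∃ m' : ℝ × ℝ →L[ℝ] ℝ,
      HasFDerivAt (Function.uncurry m) m' (s, x) ∧ m' (1, -(K s x)) = -(lam/2) * (m s x - r s x))
    (hr0 : ∀ x, X 0 ≤ x → x ≤ Y 0 → r 0 x ≤ M)
    (hm0 : ∀ x, X 0 ≤ x → x ≤ Y 0 → m 0 x ≤ M) :
    Afun lam t * (r t (X t) + m t (Y t)) ≤
      r 0 (X 0) + m 0 (Y 0) + 2 * M * (Afun lam t - 1) := by
  have hmx := aux_max lam t M hlam r m K X Y hK hX hY hrc hmc hr hm hr0 hm0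
  have hXc : ContinuousOn X (Set.Icc 0 t) := fun s hs => (hX s hs).continuousAt.continuousWithinAt
  have hYc : ContinuousOn Y (Set.Icc 0 t) := fun s hs => (hY s hs).continuousAt.continuousWithinAt
  have h1 := aux_growth lam t M hlam ht (fun s => r s (X s)) (fun s => m s (X s))
    (hrc.comp (f := fun s => (s, X s)) (continuousOn_id.prodMk hXc) (fun s hs => ⟨hs, trivial⟩))
    (fun s hs => by
      obtain ⟨r', a, b⟩ := hr s hs (X s)
      have := aux_chain a (hX s ⟨hs.1.le, hs.2⟩)
      rwa [b] at this)
    (fun s hs => (hmx s hs _ le_rfl (hXY s hs)).2)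
  have h2 := aux_growth lam t M hlam ht (fun s => m s (Y s)) (fun s => r s (Y s))
    (hmc.comp (f := fun s => (s, Y s)) (continuousOn_id.prodMk hYc) (fun s hs => ⟨hs, trivial⟩))
    (fun s hs => by
      obtain ⟨r', a, b⟩ := hm s hs (Y s)
      have := aux_chain a (hY s ⟨hs.1.le, hs.2⟩)
      rwa [b] at this)
    (fun s hs => (hmx s hs _ (hXY s hs) le_rfl).1)
  linarith

lemma aux_fderiv {r : ℝ → ℝ → ℝ} {T s x c : ℝ}
    (h : ContDiffOn ℝ 1 (Function.uncurry r) (Set.Ico 0 T ×ˢ (Set.univ : Set ℝ)))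
    (hs : s ∈ Set.Ioo 0 T) : ∃ r' : ℝ × ℝ →L[ℝ] ℝ, HasFDerivAt (Function.uncurry r) r' (s, x) ∧
      r' (1, c) = deriv (fun τ => r τ x) s + c * deriv (fun y => r s y) x := by
  have hmem : Set.Ico 0 T ×ˢ (Set.univ : Set ℝ) ∈ nhds (s, x) :=
    prod_mem_nhds (Ico_mem_nhds hs.1 hs.2) univ_mem
  have hd := ((h.contDiffAt hmem).differentiableAt (by simp)).hasFDerivAt
  refine ⟨_, hd, ?_⟩
  have h1 := (aux_chain (γ := fun _ => x) hd (hasDerivAt_const s x)).deriv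
  have h2 := (HasFDerivAt.comp_hasDerivAt (f := fun y => (s, y)) x hd
    ((hasDerivAt_const x s).prodMk (hasDerivAt_id x))).deriv
  have h2' : deriv (fun y => r s y) x = fderiv ℝ (Function.uncurry r) (s, x) (0, 1) := h2
  rw [h1, h2', ← smul_eq_mul, ← map_smul, ← map_add]
  simp

lemma aux_kpos (η : ℝ) : 0 < kfun η := Real.sqrt_pos.mpr (by positivity)

/-- along the forward characteristic `x₁(·,α)`, the function
`η = r − ℓ` is confined between `η_L(t,α)` and `η_U(t,α)`. -/
theorem eta_confined_along_forward_characteristic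
    (lam T : ℝ) (hlam : 0 < lam)
    (r l : ℝ → ℝ → ℝ) (r₀ : ℝ → ℝ) (rinf : ℝ)
    (hreg_r : ContDiffOn ℝ 1 (Function.uncurry r) (Set.Ico 0 T ×ˢ (Set.univ : Set ℝ)))
    (hreg_l : ContDiffOn ℝ 1 (Function.uncurry l) (Set.Ico 0 T ×ˢ (Set.univ : Set ℝ)))
    (hsys_r : ∀ t ∈ Set.Ico (0:ℝ) T, ∀ x : ℝ,
      deriv (fun s => r s x) t + kfun (etafun r l t x) * deriv (fun y => r t y) x
        = -(lam/2) * (r t x + l t x))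
    (hsys_l : ∀ t ∈ Set.Ico (0:ℝ) T, ∀ x : ℝ,
      deriv (fun s => l s x) t - kfun (etafun r l t x) * deriv (fun y => l t y) x
        = -(lam/2) * (r t x + l t x))
    (hr0 : ∀ x : ℝ, r 0 x = r₀ x)
    (hl0 : ∀ x : ℝ, l 0 x = -r₀ x)
    (hr₀reg : ContDiff ℝ 1 r₀)
    (hr₀bdd : ∃ C : ℝ, ∀ x : ℝ, |r₀ x| ≤ C)
    (hrinf : Filter.Tendsto r₀ Filter.atTop (nhds rinf))
    (hetabdd : ∀ t ∈ Set.Ico (0:ℝ) T, ∀ x y : ℝ,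
      |r t x - l t y| ≤ 2 * ⨆ z : ℝ, |r₀ z|)
    -- the forward characteristic starting from α and the backward characteristic flow
    (α : ℝ) (x₁ : ℝ → ℝ) (x₂ : ℝ → ℝ → ℝ)
    (hx₁0 : x₁ 0 = α)
    (hx₁ : ∀ t ∈ Set.Ico (0:ℝ) T,
      HasDerivAt x₁ (kfun (etafun r l t (x₁ t))) t)
    (hflowreg₂ : ContDiffOn ℝ 1 (Function.uncurry x₂) (Set.Ico 0 T ×ˢ (Set.univ : Set ℝ)))
    (hx₂0 : ∀ b : ℝ, x₂ 0 b = b)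
    (hx₂ : ∀ b : ℝ, ∀ t ∈ Set.Ico (0:ℝ) T,
      HasDerivAt (fun s => x₂ s b) (-(kfun (etafun r l t (x₂ t b)))) t)
    -- the correspondence map t ↦ β(t,α)
    (bmap : ℝ → ℝ)
    (hbmapreg : ContDiffOn ℝ 1 bmap (Set.Ico 0 T))
    (hbmap : ∀ t ∈ Set.Ico (0:ℝ) T, x₁ t = x₂ t (bmap t))
    -- conditions (69) on the initial profile at α
    (hcond₁ : deriv r₀ α * (r₀ α + rinf) < 0)
    (hcond₂ : ∀ x : ℝ, α ≤ x → deriv r₀ x * r₀ α < 0)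
    -- the confining functions η_L and η_U
    (etaL etaU : ℝ → ℝ)
    (hetaL : ∀ t : ℝ, etaL t = (Afun lam t)⁻¹ * (r₀ (bmap t) + r₀ α)
      + 2 * r₀ (bmap t) * (1 - (Afun lam t)⁻¹))
    (hetaU : ∀ t : ℝ, etaU t = (Afun lam t)⁻¹ * (r₀ (bmap t) + r₀ α)
      + 2 * r₀ α * (1 - (Afun lam t)⁻¹)) :
    ∀ t ∈ Set.Ico (0:ℝ) T,
      (0 < r₀ α → etaL t ≤ etafun r l t (x₁ t) ∧ etafun r l t (x₁ t) ≤ etaU t) ∧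
      (r₀ α < 0 → etaU t ≤ etafun r l t (x₁ t) ∧ etafun r l t (x₁ t) ≤ etaL t) := by
  intro t ht
  have hsub : Set.Icc 0 t ⊆ Set.Ico 0 T := fun s hs => ⟨hs.1, hs.2.trans_lt ht.2⟩
  have hsub2 : Set.Ioc 0 t ⊆ Set.Ioo 0 T := fun s hs => ⟨hs.1, hs.2.trans_lt ht.2⟩
  have ht0 : 0 ≤ t := ht.1
  set b := bmap t with hb
  set Y : ℝ → ℝ := fun s => x₂ s b with hYdef
  set K : ℝ → ℝ → ℝ := fun s x => kfun (etafun r l s x) with hKdef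
  have hK : ∀ s x, 0 < K s x := fun s x => aux_kpos _
  have hX : ∀ s ∈ Set.Icc 0 t, HasDerivAt x₁ (K s (x₁ s)) s := fun s hs => hx₁ s (hsub hs)
  have hY : ∀ s ∈ Set.Icc 0 t, HasDerivAt Y (-(K s (Y s))) s := fun s hs => hx₂ b s (hsub hs)
  have hXYt : x₁ t = Y t := hbmap t ht
  have hY0 : Y 0 = b := hx₂0 b
  have hXY : ∀ s ∈ Set.Icc 0 t, x₁ s ≤ Y s := by
    have hd : ∀ s ∈ Set.Icc 0 t, HasDerivAt (fun s => Y s - x₁ s) (-(K s (Y s)) - K s (x₁ s)) s :=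
      fun s hs => (hY s hs).sub (hX s hs)
    have hanti : AntitoneOn (fun s => Y s - x₁ s) (Set.Icc 0 t) := by
      apply antitoneOn_of_deriv_nonpos (convex_Icc 0 t)
      · exact fun s hs => (hd s hs).continuousAt.continuousWithinAt
      · exact fun s hs =>
          (hd s (interior_subset hs)).differentiableAt.differentiableWithinAt
      · intro s hs
        rw [(hd s (interior_subset hs)).deriv]
        linarith [hK s (Y s), hK s (x₁ s)]
    intro s hs
    have := hanti hs (Set.right_mem_Icc.mpr ht0) hs.2
    simp only at this
    linarith
  have hab : α ≤ b := by
    have := hXY 0 (Set.left_mem_Icc.mpr ht0)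
    rwa [hx₁0, hY0] at this
  have hrc : ContinuousOn (Function.uncurry r) (Set.Icc 0 t ×ˢ Set.univ) :=
    hreg_r.continuousOn.mono (Set.prod_mono hsub le_rfl)
  have hlc : ContinuousOn (Function.uncurry l) (Set.Icc 0 t ×ˢ Set.univ) :=
    hreg_l.continuousOn.mono (Set.prod_mono hsub le_rfl)
  have hr : ∀ s ∈ Set.Ioc 0 t, ∀ x, ∃ r' : ℝ × ℝ →L[ℝ] ℝ,
      HasFDerivAt (Function.uncurry r) r' (s, x) ∧
        r' (1, K s x) = -(lam/2) * (r s x + l s x) := by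
    intro s hs x
    obtain ⟨r', h1, h2⟩ := aux_fderiv (x := x) (c := K s x) hreg_r (hsub2 hs)
    exact ⟨r', h1, h2.trans (hsys_r s (hsub ⟨hs.1.le, hs.2⟩) x)⟩
  have hl : ∀ s ∈ Set.Ioc 0 t, ∀ x, ∃ l' : ℝ × ℝ →L[ℝ] ℝ,
      HasFDerivAt (Function.uncurry l) l' (s, x) ∧
        l' (1, -(K s x)) = -(lam/2) * (r s x + l s x) := by
    intro s hs x
    obtain ⟨r', h1, h2⟩ := aux_fderiv (x := x) (c := -(K s x)) hreg_l (hsub2 hs)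
    refine ⟨r', h1, h2.trans ?_⟩
    rw [← hsys_l s (hsub ⟨hs.1.le, hs.2⟩) x]
    ring
  -- upper bound
  have hup : ∀ M, (∀ x, α ≤ x → x ≤ b → r₀ x ≤ M) →
      Afun lam t * etafun r l t (x₁ t) ≤ r₀ α + r₀ b + 2 * M * (Afun lam t - 1) := by
    intro M hM
    have := aux_upper lam t M hlam ht0 r (fun s x => -(l s x)) K x₁ Y hK hX hY hXY hrc hlc.neg
      (fun s hs x => by
        obtain ⟨r', h1, h2⟩ := hr s hs x
        exact ⟨r', h1, by rw [h2]; ring⟩)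
      (fun s hs x => by
        obtain ⟨r', h1, h2⟩ := hl s hs x
        refine ⟨-r', h1.neg, ?_⟩
        rw [neg_apply, h2]; ring)
      (fun x h1 h2 => by rw [hr0]; exact hM x (hx₁0 ▸ h1) (hY0 ▸ h2))
      (fun x h1 h2 => by simp only [hl0, neg_neg]; exact hM x (hx₁0 ▸ h1) (hY0 ▸ h2))
    rw [← hXYt, hx₁0, hY0, hr0, hl0] at this
    simp only [etafun]
    linarith
  have hlow : ∀ M, (∀ x, α ≤ x → x ≤ b → M ≤ r₀ x) →
      r₀ α + r₀ b + 2 * M * (Afun lam t - 1) ≤ Afun lam t * etafun r l t (x₁ t) := by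
    intro M hM
    have := aux_upper lam t (-M) hlam ht0 (fun s x => -(r s x)) l K x₁ Y hK hX hY hXY hrc.neg hlc
      (fun s hs x => by
        obtain ⟨r', h1, h2⟩ := hr s hs x
        refine ⟨-r', h1.neg, ?_⟩
        rw [neg_apply, h2]; ring)
      (fun s hs x => by
        obtain ⟨r', h1, h2⟩ := hl s hs x
        exact ⟨r', h1, by rw [h2]; ring⟩)
      (fun x h1 h2 => by simp only [hr0]; exact neg_le_neg (hM x (hx₁0 ▸ h1) (hY0 ▸ h2)))
      (fun x h1 h2 => by rw [hl0]; exact neg_le_neg (hM x (hx₁0 ▸ h1) (hY0 ▸ h2)))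
    rw [← hXYt, hx₁0, hY0, hr0, hl0] at this
    simp only [etafun]
    linarith
  have hA : 0 < Afun lam t := Real.exp_pos _
  have hform : ∀ M, (Afun lam t)⁻¹ * (r₀ b + r₀ α) + 2 * M * (1 - (Afun lam t)⁻¹)
      = (r₀ α + r₀ b + 2 * M * (Afun lam t - 1)) / Afun lam t := by
    intro M
    field_simp
    ring
  have hup' : ∀ M, (∀ x, α ≤ x → x ≤ b → r₀ x ≤ M) → etafun r l t (x₁ t) ≤
      (Afun lam t)⁻¹ * (r₀ b + r₀ α) + 2 * M * (1 - (Afun lam t)⁻¹) := by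
    intro M hM
    rw [hform, le_div_iff₀ hA, mul_comm]
    exact hup M hM
  have hlow' : ∀ M, (∀ x, α ≤ x → x ≤ b → M ≤ r₀ x) →
      (Afun lam t)⁻¹ * (r₀ b + r₀ α) + 2 * M * (1 - (Afun lam t)⁻¹) ≤ etafun r l t (x₁ t) := by
    intro M hM
    rw [hform, div_le_iff₀ hA, mul_comm _ (Afun lam t)]
    exact hlow M hM
  have hdiff : Differentiable ℝ r₀ := hr₀reg.differentiable (by simp)
  rw [hetaL, hetaU, ← hb]
  constructor
  · intro hpos
    have hanti : AntitoneOn r₀ (Set.Ici α) := by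
      apply antitoneOn_of_deriv_nonpos (convex_Ici α) hdiff.continuous.continuousOn
        hdiff.differentiableOn
      intro x hx
      have := hcond₂ x (interior_subset hx)
      nlinarith
    exact ⟨hlow' _ fun x h1 h2 => hanti h1 hab h2, hup' _ fun x h1 h2 => hanti Set.self_mem_Ici h1 h1⟩
  · intro hneg
    have hmono : MonotoneOn r₀ (Set.Ici α) := by
      apply monotoneOn_of_deriv_nonneg (convex_Ici α) hdiff.continuous.continuousOn
        hdiff.differentiableOn
      intro x hx
      have := hcond₂ x (interior_subset hx)
      nlinarith
    exact ⟨hlow' _ fun x h1 h2 => hmono Set.self_mem_Ici h1 h1, hup' _ fun x h1 h2 => hmono h1 hab h2⟩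
end
end

section
/- Let λ > 0 and let r, ℓ : [0,T) × ℝ → ℝ be a C¹ solution of the diagonal system with initial data r(0,·) = r₀ = −ℓ(0,·), where r₀ is bounded and C¹, r₀(+∞) := lim_{x→+∞} r₀(x) exists and is finite, and |r(t,x) − ℓ(t,y)| ≤ 2·sup|r₀| for all t, x, y; assume the characteristic flows and the correspondence map β(t,α) exist and are C¹. Suppose α ∈ ℝ satisfies: r₀'(α)·(r₀(α) + r₀(+∞)) < 0, r₀'(x)·r₀(α) < 0 for every x ≥ α, and either r₀(α)·r₀(+∞) > 0 or r₀(+∞) = 0. Then for every t ∈ [0,T) such that −2(A(t) − 1)/√(k(η_L(t,α))) + (2 − A(t)⁻¹)/√(k(2r₀(α))) ≥ 0, the time integral of the weighted Riemann derivative q along the forward characteristic has sign opposite to r₀'(α): r₀'(α)·∫₀ᵗ q(τ, x₁(τ,α)) dτ ≤ 0. -/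
open Real Set Filter MeasureTheory

noncomputable section

lemma Lfun_eq (u : ℝ) : Lfun u = (1/2) * ((1/2) * Real.sinh (2 * Real.arsinh u) + Real.arsinh u) := by
  rw [Lfun, Real.sinh_two_mul, Real.sinh_arsinh, Real.cosh_arsinh]; ring

lemma Lfun_strictMono : StrictMono Lfun := by
  intro a b hab
  rw [Lfun_eq, Lfun_eq]
  have h1 : Real.arsinh a < Real.arsinh b := Real.arsinh_lt_arsinh.2 hab
  have h2 : Real.sinh (2 * Real.arsinh a) < Real.sinh (2 * Real.arsinh b) :=
    Real.sinh_lt_sinh.2 (by linarith)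
  linarith

lemma Lfun_neg (u : ℝ) : Lfun (-u) = -Lfun u := by
  simp [Lfun, Real.arsinh_neg]; ring

lemma Lfun_cont : Continuous Lfun := by
  unfold Lfun
  have := Real.continuous_arsinh
  fun_prop

lemma Lfun_ge {u : ℝ} (hu : 0 ≤ u) : u / 2 ≤ Lfun u := by
  have h1 : 0 ≤ Real.arsinh u := Real.arsinh_nonneg_iff.2 hu
  have h2 : 1 ≤ Real.sqrt (1 + u^2) := Real.one_le_sqrt.2 (by nlinarith)
  unfold Lfun
  nlinarith

lemma Lfun_surj : Function.Surjective Lfun := by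
  have htop : Tendsto Lfun atTop atTop := by
    refine tendsto_atTop_mono' _ ?_ (tendsto_id.atTop_div_const (show (0:ℝ) < 2 by norm_num))
    filter_upwards [eventually_ge_atTop (0:ℝ)] with u hu
    exact Lfun_ge hu
  refine Lfun_cont.surjective htop ?_
  have h := (tendsto_neg_atTop_atBot.comp htop).comp tendsto_neg_atBot_atTop
  refine h.congr fun u => ?_
  simp [Lfun_neg]

lemma Lfun_u1hat (η : ℝ) : Lfun (u1hat η) = -η/2 := Function.invFun_eq (Lfun_surj _)

lemma u1hat_neg (η : ℝ) : u1hat (-η) = -u1hat η := by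
  apply Lfun_strictMono.injective
  rw [Lfun_neg, Lfun_u1hat, Lfun_u1hat]; ring

lemma u1hat_zero : u1hat 0 = 0 := by
  have := u1hat_neg 0
  simp at this; linarith

lemma u1hat_anti : Antitone u1hat := by
  intro a b hab
  rw [← Lfun_strictMono.le_iff_le, Lfun_u1hat, Lfun_u1hat]; linarith

lemma u1hat_cont : Continuous u1hat := by
  let e := Lfun_strictMono.orderIsoOfSurjective Lfun Lfun_surj
  have : u1hat = fun η => e.symm (-η/2) := by
    funext η
    apply Lfun_strictMono.injective
    rw [Lfun_u1hat]
    exact (e.apply_symm_apply (-η/2)).symm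
  rw [this]
  exact e.symm.continuous.comp (by fun_prop)

lemma kfun_cont : Continuous kfun := by
  unfold kfun
  have := u1hat_cont
  fun_prop

lemma kfun_neg (η : ℝ) : kfun (-η) = kfun η := by simp [kfun, u1hat_neg]

lemma kfun_one_le (η : ℝ) : 1 ≤ kfun η := Real.one_le_sqrt.2 (by nlinarith [sq_nonneg (u1hat η)])

lemma kfun_mono {a b : ℝ} (ha : 0 ≤ a) (hab : a ≤ b) : kfun a ≤ kfun b := by
  have h1 := u1hat_anti hab
  have h2 := u1hat_anti ha
  rw [u1hat_zero] at h2
  apply Real.sqrt_le_sqrt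
  nlinarith

/-- the weight `1/√k` -/
def wfun (η : ℝ) : ℝ := 1 / Real.sqrt (kfun η)

lemma sqrtk_pos (η : ℝ) : 0 < Real.sqrt (kfun η) :=
  Real.sqrt_pos.2 (lt_of_lt_of_le one_pos (kfun_one_le η))

lemma wfun_cont : Continuous wfun := by
  unfold wfun
  exact continuous_const.div (kfun_cont.sqrt) fun x => (sqrtk_pos x).ne'

lemma wfun_pos (η : ℝ) : 0 < wfun η := one_div_pos.2 (sqrtk_pos η)

lemma wfun_anti {a b : ℝ} (ha : 0 ≤ a) (hab : a ≤ b) : wfun b ≤ wfun a :=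
  one_div_le_one_div_of_le (sqrtk_pos a) (Real.sqrt_le_sqrt (kfun_mono ha hab))

def Gfun (y : ℝ) : ℝ := ∫ x in (0:ℝ)..y, wfun x

lemma Gfun_deriv (y : ℝ) : HasDerivAt Gfun (wfun y) y :=
  (wfun_cont.integral_hasStrictDerivAt 0 y).hasDerivAt

lemma Gfun_sub (a b : ℝ) : Gfun b - Gfun a = ∫ x in a..b, wfun x := by
  unfold Gfun
  exact intervalIntegral.integral_interval_sub_left (wfun_cont.intervalIntegrable _ _)
    (wfun_cont.intervalIntegrable _ _)

lemma Gfun_bounds {a b : ℝ} (ha : 0 ≤ a) (hab : a ≤ b) :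
    wfun b * (b - a) ≤ Gfun b - Gfun a ∧ Gfun b - Gfun a ≤ wfun a * (b - a) := by
  rw [Gfun_sub]
  constructor
  · have := intervalIntegral.integral_mono_on hab (f := fun _ => wfun b) (g := wfun) (μ := volume)
      (by simp) (wfun_cont.intervalIntegrable _ _)
      (fun x hx => wfun_anti (ha.trans hx.1) hx.2)
    simpa [mul_comm] using this
  · have := intervalIntegral.integral_mono_on hab (g := fun _ => wfun a) (f := wfun) (μ := volume)
      (wfun_cont.intervalIntegrable _ _) (by simp)
      (fun x hx => wfun_anti ha hx.1)
    simpa [mul_comm] using this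

/-- A function with negative derivative takes larger values just to the left. -/
lemma eventually_left_gt {f : ℝ → ℝ} {f' x : ℝ} (h : HasDerivAt f f' x) (hf : f' < 0) :
    ∀ᶠ y in nhdsWithin x (Iio x), f x < f y := by
  have h1 := (hasDerivAt_iff_tendsto_slope.1 h).mono_left
    (nhdsWithin_mono x (show Iio x ⊆ {x}ᶜ from fun y hy => ne_of_lt hy))
  filter_upwards [h1.eventually (gt_mem_nhds hf), self_mem_nhdsWithin] with y hy hyx
  rw [slope_def_field, div_lt_iff_of_neg (sub_neg.2 hyx)] at hy
  linarith

lemma tri_compact {t : ℝ} {x₁ x₂ : ℝ → ℝ} (h1 : ContinuousOn x₁ (Icc 0 t))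
    (h2 : ContinuousOn x₂ (Icc 0 t)) (hle : ∀ τ ∈ Icc 0 t, x₁ τ ≤ x₂ τ) :
    IsCompact {p : ℝ × ℝ | p.1 ∈ Icc 0 t ∧ p.2 ∈ Icc (x₁ p.1) (x₂ p.1)} := by
  have hc : IsCompact ((Icc (0:ℝ) t) ×ˢ (Icc (0:ℝ) 1)) := isCompact_Icc.prod isCompact_Icc
  have himg := hc.image_of_continuousOn
    (f := fun p : ℝ × ℝ => (p.1, x₁ p.1 + p.2 * (x₂ p.1 - x₁ p.1))) (by
      have e1 : ContinuousOn (fun p : ℝ × ℝ => x₁ p.1) ((Icc (0:ℝ) t) ×ˢ (Icc (0:ℝ) 1)) :=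
        h1.comp continuousOn_fst fun p hp => hp.1
      have e2 : ContinuousOn (fun p : ℝ × ℝ => x₂ p.1) ((Icc (0:ℝ) t) ×ˢ (Icc (0:ℝ) 1)) :=
        h2.comp continuousOn_fst fun p hp => hp.1
      exact continuousOn_fst.prodMk (e1.add (continuousOn_snd.mul (e2.sub e1))))
  convert himg using 1
  ext ⟨τ, x⟩
  simp only [mem_ofPred_eq, mem_image, mem_prod, Prod.exists, Prod.mk.injEq]
  constructor
  · rintro ⟨hτ, hx⟩
    rcases (hle τ hτ).eq_or_lt with he | hlt
    · refine ⟨τ, 0, ⟨hτ, by simp⟩, rfl, ?_⟩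
      have := hx.1; have := hx.2
      simp; linarith
    · have hpos : 0 < x₂ τ - x₁ τ := sub_pos.2 hlt
      refine ⟨τ, (x - x₁ τ) / (x₂ τ - x₁ τ), ⟨hτ, ?_, ?_⟩, rfl, ?_⟩
      · exact div_nonneg (sub_nonneg.2 hx.1) hpos.le
      · rw [div_le_one hpos]; linarith [hx.2]
      · field_simp; ring
  · rintro ⟨a, θ, ⟨ha, hθ⟩, rfl, rfl⟩
    have := hle a ha
    have h0 := hθ.1
    have h1 := hθ.2
    refine ⟨ha, ?_, ?_⟩ <;> nlinarith

lemma curve_deriv {r : ℝ → ℝ → ℝ} {D : ℝ × ℝ →L[ℝ] ℝ} {c : ℝ → ℝ} {v τ : ℝ}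
    (hD : HasFDerivAt (Function.uncurry r) D (τ, c τ)) (hc : HasDerivAt c v τ) :
    HasDerivAt (fun a => r a (c a)) (D (1, v)) τ :=
  HasFDerivAt.comp_hasDerivAt (l := Function.uncurry r) (f := fun a => (a, c a)) τ hD
    ((hasDerivAt_id τ).prodMk hc)

lemma maxprin {lam t M : ℝ} (hlam : 0 < lam) (K r s : ℝ → ℝ → ℝ) (x₁ x₂ : ℝ → ℝ)
    (hK : ∀ τ x, 0 < K τ x)
    (hrc : ContinuousOn (Function.uncurry r) (Icc 0 t ×ˢ univ))
    (hsc : ContinuousOn (Function.uncurry s) (Icc 0 t ×ˢ univ))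
    (hr : ∀ τ ∈ Ioc 0 t, ∀ x, ∃ D : ℝ × ℝ →L[ℝ] ℝ, HasFDerivAt (Function.uncurry r) D (τ, x) ∧
      D (1, K τ x) = -(lam/2) * (r τ x - s τ x))
    (hs : ∀ τ ∈ Ioc 0 t, ∀ x, ∃ D : ℝ × ℝ →L[ℝ] ℝ, HasFDerivAt (Function.uncurry s) D (τ, x) ∧
      D (1, -K τ x) = -(lam/2) * (s τ x - r τ x))
    (h1 : ∀ τ ∈ Icc 0 t, HasDerivAt x₁ (K τ (x₁ τ)) τ)
    (h2 : ∀ τ ∈ Icc 0 t, HasDerivAt x₂ (-K τ (x₂ τ)) τ)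
    (hle : ∀ τ ∈ Icc 0 t, x₁ τ ≤ x₂ τ)
    (hr0 : ∀ x ∈ Icc (x₁ 0) (x₂ 0), r 0 x ≤ M)
    (hs0 : ∀ x ∈ Icc (x₁ 0) (x₂ 0), s 0 x ≤ M) :
    ∀ τ ∈ Icc 0 t, ∀ x ∈ Icc (x₁ τ) (x₂ τ), r τ x ≤ M ∧ s τ x ≤ M := by
  have c1 : ContinuousOn x₁ (Icc 0 t) := fun τ hτ => (h1 τ hτ).continuousAt.continuousWithinAt
  have c2 : ContinuousOn x₂ (Icc 0 t) := fun τ hτ => (h2 τ hτ).continuousAt.continuousWithinAt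
  have m1 : MonotoneOn x₁ (Icc 0 t) :=
    monotoneOn_of_hasDerivWithinAt_nonneg (convex_Icc 0 t) c1
      (fun τ hτ => (h1 τ (interior_subset hτ)).hasDerivWithinAt) (fun τ _ => (hK _ _).le)
  have m2 : AntitoneOn x₂ (Icc 0 t) :=
    antitoneOn_of_hasDerivWithinAt_nonpos (convex_Icc 0 t) c2
      (fun τ hτ => (h2 τ (interior_subset hτ)).hasDerivWithinAt)
      (fun τ _ => neg_nonpos.2 (hK _ _).le)
  have key : ∀ ε > 0, ∀ τ ∈ Icc 0 t, ∀ x ∈ Icc (x₁ τ) (x₂ τ),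
      max (r τ x) (s τ x) - ε * τ ≤ M := by
    intro ε hε τ₀ hτ₀ y₀ hy₀
    set Δ := {p : ℝ × ℝ | p.1 ∈ Icc 0 t ∧ p.2 ∈ Icc (x₁ p.1) (x₂ p.1)} with hΔ
    have hcomp : IsCompact Δ := tri_compact c1 c2 hle
    have hsub : Δ ⊆ Icc 0 t ×ˢ univ := fun p hp => ⟨hp.1, trivial⟩
    have hcont : ContinuousOn (fun p : ℝ × ℝ => max (r p.1 p.2) (s p.1 p.2) - ε * p.1) Δ := by
      have e1 : ContinuousOn (fun p : ℝ × ℝ => r p.1 p.2) Δ := hrc.mono hsub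
      have e2 : ContinuousOn (fun p : ℝ × ℝ => s p.1 p.2) Δ := hsc.mono hsub
      exact (e1.sup e2).sub (by fun_prop)
    obtain ⟨⟨τ, x⟩, ⟨hτ, hx⟩, hmax⟩ := hcomp.exists_isMaxOn ⟨(τ₀, y₀), hτ₀, hy₀⟩ hcont
    simp only at hτ hx
    have hmax' : ∀ a ∈ Icc 0 t, ∀ y ∈ Icc (x₁ a) (x₂ a),
        max (r a y) (s a y) - ε * a ≤ max (r τ x) (s τ x) - ε * τ :=
      fun a ha y hy => hmax (a := (a, y)) ⟨ha, hy⟩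
    refine (hmax' τ₀ hτ₀ y₀ hy₀).trans ?_
    by_contra hcon
    push Not at hcon
    have hτpos : 0 < τ := by
      rcases hτ.1.eq_or_lt with h | h
      · exfalso
        subst h
        have := max_le (hr0 x hx) (hs0 x hx)
        linarith
      · exact h
    have hτ' : τ ∈ Ioc 0 t := ⟨hτpos, hτ.2⟩
    have hleft : ∀ᶠ a in nhdsWithin τ (Iio τ), a ∈ Icc 0 t ∧ a < τ := by
      filter_upwards [Ioo_mem_nhdsLT hτpos] with a ha
      exact ⟨⟨ha.1.le, ha.2.le.trans hτ.2⟩, ha.2⟩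
    rcases le_total (s τ x) (r τ x) with hsr | hrs
    · obtain ⟨c, hc0, hcd, hcin⟩ : ∃ c : ℝ → ℝ, c τ = x ∧ HasDerivAt c (K τ x) τ ∧
          ∀ᶠ a in nhdsWithin τ (Iio τ), c a ∈ Icc (x₁ a) (x₂ a) := by
        rcases hx.1.eq_or_lt with he | hlt
        · refine ⟨x₁, he, he ▸ h1 τ hτ, ?_⟩
          filter_upwards [hleft] with a ha
          exact ⟨le_rfl, hle a ha.1⟩
        · have hd : HasDerivAt (fun a => x + K τ x * (a - τ)) (K τ x) τ := by
            simpa using (((hasDerivAt_id τ).sub_const τ).const_mul (K τ x)).const_add x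
          refine ⟨fun a => x + K τ x * (a - τ), by simp, hd, ?_⟩
          have hev := ((h1 τ hτ).continuousAt.eventually_lt hd.continuousAt (by simpa using hlt))
          filter_upwards [hleft, hev.filter_mono nhdsWithin_le_nhds] with a ha ha2
          refine ⟨ha2.le, ?_⟩
          have := m2 ha.1 hτ ha.2.le
          have := hx.2
          have := mul_neg_of_pos_of_neg (hK τ x) (sub_neg.2 ha.2)
          linarith
      obtain ⟨D, hD, hDv⟩ := hr τ hτ' x
      have hf := (curve_deriv (r := r) (c := c) (hc0.symm ▸ hD) hcd).sub
        ((hasDerivAt_id τ).const_mul ε)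
      have hneg : D (1, K τ x) - ε * 1 < 0 := by
        rw [hDv]
        have : 0 ≤ (lam/2) * (r τ x - s τ x) := by apply mul_nonneg <;> linarith
        linarith
      obtain ⟨a, ha1, ha2, ha3⟩ :=
        ((eventually_left_gt hf hneg).and (hcin.and hleft)).exists
      have := hmax' a ha3.1 (c a) ha2
      rw [max_eq_left hsr] at this
      have h5 := le_max_left (r a (c a)) (s a (c a))
      simp [hc0] at ha1
      linarith
    · obtain ⟨c, hc0, hcd, hcin⟩ : ∃ c : ℝ → ℝ, c τ = x ∧ HasDerivAt c (-K τ x) τ ∧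
          ∀ᶠ a in nhdsWithin τ (Iio τ), c a ∈ Icc (x₁ a) (x₂ a) := by
        rcases hx.2.eq_or_lt with he | hlt
        · refine ⟨x₂, he.symm, he ▸ h2 τ hτ, ?_⟩
          filter_upwards [hleft] with a ha
          exact ⟨hle a ha.1, le_rfl⟩
        · have hd : HasDerivAt (fun a => x + (-K τ x) * (a - τ)) (-K τ x) τ := by
            simpa using (((hasDerivAt_id τ).sub_const τ).const_mul (-K τ x)).const_add x
          refine ⟨fun a => x + (-K τ x) * (a - τ), by simp, hd, ?_⟩
          have hev := (hd.continuousAt.eventually_lt (h2 τ hτ).continuousAt (by simpa using hlt))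
          filter_upwards [hleft, hev.filter_mono nhdsWithin_le_nhds] with a ha ha2
          refine ⟨?_, ha2.le⟩
          have := m1 ha.1 hτ ha.2.le
          have := hx.1
          have := mul_neg_of_pos_of_neg (hK τ x) (sub_neg.2 ha.2)
          linarith
      obtain ⟨D, hD, hDv⟩ := hs τ hτ' x
      have hf := (curve_deriv (r := s) (c := c) (hc0.symm ▸ hD) hcd).sub
        ((hasDerivAt_id τ).const_mul ε)
      have hneg : D (1, -K τ x) - ε * 1 < 0 := by
        rw [hDv]
        have : 0 ≤ (lam/2) * (s τ x - r τ x) := by apply mul_nonneg <;> linarith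
        linarith
      obtain ⟨a, ha1, ha2, ha3⟩ :=
        ((eventually_left_gt hf hneg).and (hcin.and hleft)).exists
      have := hmax' a ha3.1 (c a) ha2
      rw [max_eq_right hrs] at this
      have h5 := le_max_right (r a (c a)) (s a (c a))
      simp [hc0] at ha1
      linarith
  intro τ hτ x hx
  have hfin : max (r τ x) (s τ x) ≤ M := by
    apply le_of_forall_pos_le_add
    intro δ hδ
    have hpos : 0 < τ + 1 := by linarith [hτ.1]
    have := key (δ / (τ + 1)) (by positivity) τ hτ x hx
    have h3 : δ / (τ + 1) * τ ≤ δ := by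
      rw [div_mul_eq_mul_div, div_le_iff₀ hpos]; nlinarith
    linarith
  exact ⟨(le_max_left _ _).trans hfin, (le_max_right _ _).trans hfin⟩

lemma Afun_deriv (lam τ : ℝ) : HasDerivAt (Afun lam) (lam/2 * Afun lam τ) τ := by
  have h : HasDerivAt (fun a : ℝ => lam * a / 2) (lam / 2) τ := by
    simpa using ((hasDerivAt_id τ).const_mul lam).div_const 2
  have := h.exp
  unfold Afun
  convert this using 1
  ring

lemma Afun_pos (lam τ : ℝ) : 0 < Afun lam τ := Real.exp_pos _

lemma Afun_zero (lam : ℝ) : Afun lam 0 = 1 := by simp [Afun]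

lemma Afun_cont (lam : ℝ) : Continuous (Afun lam) :=
  continuous_iff_continuousAt.2 fun τ => (Afun_deriv lam τ).continuousAt

lemma grow {lam t c : ℝ} (hlam : 0 < lam) (ht : 0 ≤ t) (f g : ℝ → ℝ)
    (hf : ContinuousOn f (Icc 0 t))
    (hd : ∀ τ ∈ Ioo 0 t, HasDerivAt f (-(lam/2) * (f τ - g τ)) τ)
    (hg : ∀ τ ∈ Icc 0 t, c ≤ g τ) : f 0 - c ≤ Afun lam t * (f t - c) := by
  have hm : MonotoneOn (fun τ => Afun lam τ * (f τ - c)) (Icc 0 t) := by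
    refine monotoneOn_of_hasDerivWithinAt_nonneg (convex_Icc 0 t)
      (f' := fun τ => lam/2 * Afun lam τ * (g τ - c)) ?_ ?_ ?_
    · exact (Afun_cont lam).continuousOn.mul (hf.sub continuousOn_const)
    · intro τ hτ
      rw [interior_Icc] at hτ
      have := ((Afun_deriv lam τ).mul ((hd τ hτ).sub_const c)).hasDerivWithinAt
        (s := interior (Icc 0 t))
      refine this.congr_deriv ?_
      ring
    · intro τ hτ
      have := hg τ (interior_subset hτ)
      have := Afun_pos lam τ
      have : 0 ≤ g τ - c := by linarith
      positivity
  have := hm (left_mem_Icc.2 ht) (right_mem_Icc.2 ht) ht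
  simpa [Afun_zero] using this

lemma apex {lam t m M : ℝ} (hlam : 0 < lam) (ht : 0 ≤ t) (K r s : ℝ → ℝ → ℝ) (x₁ x₂ : ℝ → ℝ)
    (hK : ∀ τ x, 0 < K τ x)
    (hrc : ContinuousOn (Function.uncurry r) (Icc 0 t ×ˢ univ))
    (hsc : ContinuousOn (Function.uncurry s) (Icc 0 t ×ˢ univ))
    (hr : ∀ τ ∈ Ioc 0 t, ∀ x, ∃ D : ℝ × ℝ →L[ℝ] ℝ, HasFDerivAt (Function.uncurry r) D (τ, x) ∧
      D (1, K τ x) = -(lam/2) * (r τ x - s τ x))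
    (hs : ∀ τ ∈ Ioc 0 t, ∀ x, ∃ D : ℝ × ℝ →L[ℝ] ℝ, HasFDerivAt (Function.uncurry s) D (τ, x) ∧
      D (1, -K τ x) = -(lam/2) * (s τ x - r τ x))
    (h1 : ∀ τ ∈ Icc 0 t, HasDerivAt x₁ (K τ (x₁ τ)) τ)
    (h2 : ∀ τ ∈ Icc 0 t, HasDerivAt x₂ (-K τ (x₂ τ)) τ)
    (hmeet : x₁ t = x₂ t)
    (hr0 : ∀ x ∈ Icc (x₁ 0) (x₂ 0), r 0 x ∈ Icc m M)
    (hs0 : ∀ x ∈ Icc (x₁ 0) (x₂ 0), s 0 x ∈ Icc m M)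
    (hM : r 0 (x₁ 0) = M) (hm : s 0 (x₂ 0) = m) :
    2 * m * Afun lam t + (M - m) ≤ Afun lam t * (r t (x₁ t) + s t (x₁ t)) ∧
    Afun lam t * (r t (x₁ t) + s t (x₁ t)) ≤ 2 * M * Afun lam t - (M - m) := by
  have c1 : ContinuousOn x₁ (Icc 0 t) := fun τ hτ => (h1 τ hτ).continuousAt.continuousWithinAt
  have c2 : ContinuousOn x₂ (Icc 0 t) := fun τ hτ => (h2 τ hτ).continuousAt.continuousWithinAt
  have m1 : MonotoneOn x₁ (Icc 0 t) :=
    monotoneOn_of_hasDerivWithinAt_nonneg (convex_Icc 0 t) c1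
      (fun τ hτ => (h1 τ (interior_subset hτ)).hasDerivWithinAt) (fun τ _ => (hK _ _).le)
  have m2 : AntitoneOn x₂ (Icc 0 t) :=
    antitoneOn_of_hasDerivWithinAt_nonpos (convex_Icc 0 t) c2
      (fun τ hτ => (h2 τ (interior_subset hτ)).hasDerivWithinAt)
      (fun τ _ => neg_nonpos.2 (hK _ _).le)
  have hle : ∀ τ ∈ Icc 0 t, x₁ τ ≤ x₂ τ := by
    intro τ hτ
    have e1 := m1 hτ (right_mem_Icc.2 ht) hτ.2
    have e2 := m2 hτ (right_mem_Icc.2 ht) hτ.2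
    linarith
  have hup := maxprin hlam K r s x₁ x₂ hK hrc hsc hr hs h1 h2 hle
    (fun x hx => (hr0 x hx).2) (fun x hx => (hs0 x hx).2)
  have hlo := maxprin (M := -m) hlam K (fun a y => - r a y) (fun a y => - s a y) x₁ x₂ hK
    hrc.neg hsc.neg
    (fun τ hτ x => by
      obtain ⟨D, hD, hv⟩ := hr τ hτ x
      exact ⟨-D, hD.neg, by simp [hv]; ring⟩)
    (fun τ hτ x => by
      obtain ⟨D, hD, hv⟩ := hs τ hτ x
      exact ⟨-D, hD.neg, by simp only [neg_apply, hv]; ring⟩)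
    h1 h2 hle
    (fun x hx => neg_le_neg (hr0 x hx).1) (fun x hx => neg_le_neg (hs0 x hx).1)
  have in1 : ∀ τ ∈ Icc 0 t, x₁ τ ∈ Icc (x₁ τ) (x₂ τ) := fun τ hτ => ⟨le_rfl, hle τ hτ⟩
  have in2 : ∀ τ ∈ Icc 0 t, x₂ τ ∈ Icc (x₁ τ) (x₂ τ) := fun τ hτ => ⟨hle τ hτ, le_rfl⟩
  have rc : ContinuousOn (fun τ => r τ (x₁ τ)) (Icc 0 t) :=
    hrc.comp (f := fun τ => (τ, x₁ τ)) (continuousOn_id.prodMk c1) fun τ hτ => ⟨hτ, trivial⟩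
  have sc : ContinuousOn (fun τ => s τ (x₂ τ)) (Icc 0 t) :=
    hsc.comp (f := fun τ => (τ, x₂ τ)) (continuousOn_id.prodMk c2) fun τ hτ => ⟨hτ, trivial⟩
  have rd : ∀ τ ∈ Ioo 0 t, HasDerivAt (fun τ => r τ (x₁ τ))
      (-(lam/2) * (r τ (x₁ τ) - s τ (x₁ τ))) τ := by
    intro τ hτ
    obtain ⟨D, hD, hv⟩ := hr τ ⟨hτ.1, hτ.2.le⟩ (x₁ τ)
    exact hv ▸ curve_deriv hD (h1 τ ⟨hτ.1.le, hτ.2.le⟩)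
  have sd : ∀ τ ∈ Ioo 0 t, HasDerivAt (fun τ => s τ (x₂ τ))
      (-(lam/2) * (s τ (x₂ τ) - r τ (x₂ τ))) τ := by
    intro τ hτ
    obtain ⟨D, hD, hv⟩ := hs τ ⟨hτ.1, hτ.2.le⟩ (x₂ τ)
    exact hv ▸ curve_deriv hD (h2 τ ⟨hτ.1.le, hτ.2.le⟩)
  have g1 := grow (c := m) hlam ht _ (fun τ => s τ (x₁ τ)) rc rd
    (fun τ hτ => neg_le_neg_iff.1 (hlo τ hτ _ (in1 τ hτ)).2)
  have g2 := grow (c := m) hlam ht _ (fun τ => r τ (x₂ τ)) sc sd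
    (fun τ hτ => neg_le_neg_iff.1 (hlo τ hτ _ (in2 τ hτ)).1)
  have g3 := grow (c := -M) hlam ht _ (fun τ => - s τ (x₁ τ)) rc.neg
    (fun τ hτ => (rd τ hτ).neg.congr_deriv (by ring_nf; simp; ring))
    (fun τ hτ => neg_le_neg (hup τ hτ _ (in1 τ hτ)).2)
  have g4 := grow (c := -M) hlam ht _ (fun τ => - r τ (x₂ τ)) sc.neg
    (fun τ hτ => (sd τ hτ).neg.congr_deriv (by ring_nf; simp; ring))
    (fun τ hτ => neg_le_neg (hup τ hτ _ (in2 τ hτ)).1)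
  simp only [hM, hm, ← hmeet, Pi.neg_apply] at g1 g2 g3 g4
  constructor <;> nlinarith

lemma partials {r : ℝ → ℝ → ℝ} {T τ : ℝ}
    (hreg : ContDiffOn ℝ 1 (Function.uncurry r) (Set.Ico 0 T ×ˢ (Set.univ : Set ℝ)))
    (hτ : τ ∈ Ioo 0 T) (x : ℝ) :
    ∃ D : ℝ × ℝ →L[ℝ] ℝ, HasFDerivAt (Function.uncurry r) D (τ, x) ∧
      ∀ v, D (1, v) = deriv (fun a => r a x) τ + v * deriv (fun y => r τ y) x := by
  have hn : Set.Ico 0 T ×ˢ (Set.univ : Set ℝ) ∈ nhds (τ, x) :=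
    prod_mem_nhds (Ico_mem_nhds hτ.1 hτ.2) univ_mem
  have hD := ((hreg.contDiffAt hn).differentiableAt (by norm_num)).hasFDerivAt
  refine ⟨_, hD, fun v => ?_⟩
  have e1 : HasDerivAt (fun a => r a x) _ τ :=
    HasFDerivAt.comp_hasDerivAt (l := Function.uncurry r) (f := fun a => (a, x)) τ hD
      ((hasDerivAt_id τ).prodMk (hasDerivAt_const τ x))
  have e2 : HasDerivAt (fun y => r τ y) _ x :=
    HasFDerivAt.comp_hasDerivAt (l := Function.uncurry r) (f := fun y => (τ, y)) x hD
      ((hasDerivAt_const x τ).prodMk (hasDerivAt_id x))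
  rw [e1.deriv, e2.deriv, ← smul_eq_mul v, ← map_smul, ← map_add]
  simp

lemma core
    (lam T : ℝ) (hlam : 0 < lam)
    (r l : ℝ → ℝ → ℝ) (r₀ : ℝ → ℝ)
    (hreg_r : ContDiffOn ℝ 1 (Function.uncurry r) (Set.Ico 0 T ×ˢ (Set.univ : Set ℝ)))
    (hreg_l : ContDiffOn ℝ 1 (Function.uncurry l) (Set.Ico 0 T ×ˢ (Set.univ : Set ℝ)))
    (hsys_r : ∀ t ∈ Set.Ico (0:ℝ) T, ∀ x : ℝ,
      deriv (fun s => r s x) t + kfun (etafun r l t x) * deriv (fun y => r t y) x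
        = -(lam/2) * (r t x + l t x))
    (hsys_l : ∀ t ∈ Set.Ico (0:ℝ) T, ∀ x : ℝ,
      deriv (fun s => l s x) t - kfun (etafun r l t x) * deriv (fun y => l t y) x
        = -(lam/2) * (r t x + l t x))
    (hr0 : ∀ x : ℝ, r 0 x = r₀ x)
    (hl0 : ∀ x : ℝ, l 0 x = -r₀ x)
    (α : ℝ) (x₁ : ℝ → ℝ) (x₂ : ℝ → ℝ → ℝ)
    (hx₁0 : x₁ 0 = α)
    (hx₁ : ∀ t ∈ Set.Ico (0:ℝ) T,
      HasDerivAt x₁ (kfun (etafun r l t (x₁ t))) t)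
    (hx₂0 : ∀ b : ℝ, x₂ 0 b = b)
    (hx₂ : ∀ b : ℝ, ∀ t ∈ Set.Ico (0:ℝ) T,
      HasDerivAt (fun s => x₂ s b) (-(kfun (etafun r l t (x₂ t b)))) t)
    (bmap : ℝ → ℝ)
    (hbmapc : ContinuousOn bmap (Set.Ico 0 T))
    (hbmap : ∀ t ∈ Set.Ico (0:ℝ) T, x₁ t = x₂ t (bmap t))
    (hanti : AntitoneOn r₀ (Ici α)) (hnn : ∀ x, α ≤ x → 0 ≤ r₀ x)
    (t : ℝ) (ht : t ∈ Set.Ico (0:ℝ) T) (eL : ℝ)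
    (heL : eL = (Afun lam t)⁻¹ * (r₀ (bmap t) + r₀ α)
      + 2 * r₀ (bmap t) * (1 - (Afun lam t)⁻¹))
    (hcond : 0 ≤ -2 * (Afun lam t - 1) / Real.sqrt (kfun eL)
          + (2 - (Afun lam t)⁻¹) / Real.sqrt (kfun (2 * r₀ α))) :
    0 ≤ ∫ τ in (0:ℝ)..t, qfun lam r l τ (x₁ τ) := by
  by_cases hint : IntervalIntegrable (fun τ => qfun lam r l τ (x₁ τ)) volume 0 t
  swap
  · rw [intervalIntegral.integral_undef hint]
  have hkpos : ∀ η, 0 < kfun η := fun η => one_pos.trans_le (kfun_one_le η)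
  have ht0 : 0 ≤ t := ht.1
  have hIcc : Icc 0 t ⊆ Ico 0 T := fun τ hτ => ⟨hτ.1, hτ.2.trans_lt ht.2⟩
  have sm1 : StrictMonoOn x₁ (Ico 0 T) :=
    strictMonoOn_of_hasDerivWithinAt_pos (convex_Ico 0 T)
      (fun τ hτ => (hx₁ τ hτ).continuousAt.continuousWithinAt)
      (fun τ hτ => (hx₁ τ (interior_subset hτ)).hasDerivWithinAt) (fun τ _ => hkpos _)
  have sm2 : ∀ b, StrictAntiOn (fun τ => x₂ τ b) (Ico 0 T) := fun b =>
    strictAntiOn_of_hasDerivWithinAt_neg (convex_Ico 0 T)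
      (fun τ hτ => (hx₂ b τ hτ).continuousAt.continuousWithinAt)
      (fun τ hτ => (hx₂ b τ (interior_subset hτ)).hasDerivWithinAt)
      (fun τ _ => neg_neg_of_pos (hkpos _))
  have h0T : (0:ℝ) ∈ Ico 0 T := ⟨le_rfl, ht.1.trans_lt ht.2⟩
  have hb0 : bmap 0 = α := by rw [← hx₂0 (bmap 0), ← hbmap 0 h0T, hx₁0]
  have hbge : ∀ τ ∈ Ico 0 T, α ≤ bmap τ := by
    intro τ hτ
    have e1 := sm1.monotoneOn h0T hτ hτ.1
    have e2 := (sm2 (bmap τ)).antitoneOn h0T hτ hτ.1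
    simp only [hx₂0] at e2
    rw [← hbmap τ hτ] at e2
    linarith
  have hinj' : ∀ a ∈ Ico 0 T, ∀ b ∈ Ico 0 T, a < b → bmap a ≠ bmap b := by
    intro a ha b hb hab he
    have e1 := sm1 ha hb hab
    have e2 := sm2 (bmap b) ha hb hab
    simp only at e2
    rw [← hbmap b hb, ← he, ← hbmap a ha] at e2
    linarith
  have hbmono : MonotoneOn bmap (Icc 0 t) := by
    refine (ContinuousOn.strictMonoOn_of_injOn_Icc ht0 ?_ (hbmapc.mono hIcc) ?_).monotoneOn
    · rw [hb0]; exact hbge t ht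
    · intro a ha b hb hab
      rcases lt_trichotomy a b with h | h | h
      · exact absurd hab (hinj' a (hIcc ha) b (hIcc hb) h)
      · exact h
      · exact absurd hab.symm (hinj' b (hIcc hb) a (hIcc ha) h)
  set M := r₀ α with hMdef
  set m := r₀ (bmap t) with hmdef
  have hm0 : 0 ≤ m := hnn _ (hbge t ht)
  have hmM : m ≤ M := hanti (mem_Ici.2 le_rfl) (mem_Ici.2 (hbge t ht)) (hbge t ht)
  set e : ℝ → ℝ := fun τ => etafun r l τ (x₁ τ) with hedef
  -- a priori bounds along the forward characteristic
  have hE : ∀ τ ∈ Icc 0 t,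
      2 * r₀ (bmap τ) * Afun lam τ + (M - r₀ (bmap τ)) ≤ Afun lam τ * e τ ∧
      Afun lam τ * e τ ≤ 2 * M * Afun lam τ - (M - r₀ (bmap τ)) := by
    intro τ hτ
    have hτT := hIcc hτ
    have hsub : Icc 0 τ ⊆ Ico 0 T := fun a ha => ⟨ha.1, ha.2.trans_lt hτT.2⟩
    have hsub2 : Icc 0 τ ×ˢ (univ : Set ℝ) ⊆ Ico 0 T ×ˢ univ := prod_mono hsub subset_rfl
    have hini : ∀ x ∈ Icc (x₁ 0) (x₂ 0 (bmap τ)), r₀ x ∈ Icc (r₀ (bmap τ)) M := by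
      intro x hx
      rw [hx₁0, hx₂0] at hx
      exact ⟨hanti hx.1 (hx.1.trans hx.2) hx.2, hanti (mem_Ici.2 le_rfl) hx.1 hx.1⟩
    have := apex (m := r₀ (bmap τ)) (M := M) hlam hτ.1 (fun a y => kfun (etafun r l a y)) r
      (fun a y => - l a y) x₁ (fun a => x₂ a (bmap τ)) (fun _ _ => hkpos _)
      (hreg_r.continuousOn.mono hsub2) (hreg_l.continuousOn.mono hsub2).neg
      (fun a ha x => by
        have haT : a ∈ Ioo 0 T := ⟨ha.1, ha.2.trans_lt hτT.2⟩
        obtain ⟨D, hD, hv⟩ := partials hreg_r haT x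
        refine ⟨D, hD, ?_⟩
        rw [hv, hsys_r a ⟨haT.1.le, haT.2⟩ x]; ring)
      (fun a ha x => by
        have haT : a ∈ Ioo 0 T := ⟨ha.1, ha.2.trans_lt hτT.2⟩
        obtain ⟨D, hD, hv⟩ := partials hreg_l haT x
        refine ⟨-D, hD.neg, ?_⟩
        have := hsys_l a ⟨haT.1.le, haT.2⟩ x
        rw [neg_apply, hv]
        linarith)
      (fun a ha => hx₁ a (hsub ha)) (fun a ha => hx₂ _ a (hsub ha)) (hbmap τ hτT)
      (fun x hx => by simpa only [hr0] using hini x hx)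
      (fun x hx => by simpa only [hl0, neg_neg] using hini x hx)
      (by rw [hr0, hx₁0]) (by rw [hx₂0, hl0, neg_neg])
    simpa only [hedef, etafun, sub_eq_add_neg] using this
  have hApos := Afun_pos lam
  have hA1 : ∀ τ, 0 ≤ τ → 1 ≤ Afun lam τ := fun τ hτ => Real.one_le_exp (by positivity)
  have hAmono : ∀ τ ∈ Icc 0 t, Afun lam τ ≤ Afun lam t := fun τ hτ =>
    Real.exp_le_exp.2 (by have := mul_le_mul_of_nonneg_left hτ.2 hlam.le; linarith)
  have heL' : eL = 2 * m + (Afun lam t)⁻¹ * (M - m) := by rw [heL]; ring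
  have heL0 : 0 ≤ eL := by
    rw [heL']
    have := inv_pos.2 (hApos t)
    have : 0 ≤ M - m := by linarith
    positivity
  have hlow : ∀ τ ∈ Icc 0 t, 2 * m + (Afun lam τ)⁻¹ * (M - m) ≤ e τ := by
    intro τ hτ
    have h1 := (hE τ hτ).1
    have h2 : m ≤ r₀ (bmap τ) := hanti (mem_Ici.2 (hbge τ (hIcc hτ))) (mem_Ici.2 (hbge t ht))
      (hbmono hτ (right_mem_Icc.2 ht0) hτ.2)
    have h3 := hA1 τ hτ.1
    have h4 : Afun lam τ * (2 * m + (Afun lam τ)⁻¹ * (M - m)) = 2 * m * Afun lam τ + (M - m) := by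
      have := (hApos τ).ne'
      field_simp
    refine le_of_mul_le_mul_left ?_ (hApos τ)
    rw [h4]
    nlinarith
  have hlow2 : ∀ τ ∈ Icc 0 t, eL ≤ e τ := by
    intro τ hτ
    refine le_trans ?_ (hlow τ hτ)
    rw [heL']
    have : (Afun lam t)⁻¹ ≤ (Afun lam τ)⁻¹ := inv_anti₀ (hApos τ) (hAmono τ hτ)
    have : 0 ≤ M - m := by linarith
    nlinarith
  have hupp : ∀ τ ∈ Icc 0 t, e τ ≤ 2 * M := by
    intro τ hτ
    have h1 := (hE τ hτ).2
    have h2 : r₀ (bmap τ) ≤ M :=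
      hanti (mem_Ici.2 le_rfl) (mem_Ici.2 (hbge τ (hIcc hτ))) (hbge τ (hIcc hτ))
    refine le_of_mul_le_mul_left ?_ (hApos τ)
    linarith
  -- the function B = A (G(2M) - G(e))
  have hx₁c : ContinuousOn x₁ (Icc 0 t) := fun τ hτ =>
    (hx₁ τ (hIcc hτ)).continuousAt.continuousWithinAt
  have hmaps : MapsTo (fun τ => (τ, x₁ τ)) (Icc 0 t) (Ico 0 T ×ˢ univ) :=
    fun τ hτ => ⟨hIcc hτ, trivial⟩
  have hec : ContinuousOn e (Icc 0 t) :=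
    (hreg_r.continuousOn.comp (continuousOn_id.prodMk hx₁c) hmaps).sub
      (hreg_l.continuousOn.comp (continuousOn_id.prodMk hx₁c) hmaps)
  have hGc : Continuous Gfun :=
    continuous_iff_continuousAt.2 fun y => (Gfun_deriv y).continuousAt
  set g : ℝ → ℝ := fun τ => Gfun (2 * M) - Gfun (e τ) with hgdef
  have hgc : ContinuousOn g (Icc 0 t) := continuousOn_const.sub (hGc.comp_continuousOn hec)
  have hed : ∀ τ ∈ Ioo 0 t, HasDerivAt e
      (-2 * kfun (e τ) * deriv (fun y => l τ y) (x₁ τ)) τ := by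
    intro τ hτ
    have hτT : τ ∈ Ico 0 T := hIcc ⟨hτ.1.le, hτ.2.le⟩
    obtain ⟨D, hD, hv⟩ := partials hreg_r ⟨hτ.1, hτT.2⟩ (x₁ τ)
    obtain ⟨D', hD', hv'⟩ := partials hreg_l ⟨hτ.1, hτT.2⟩ (x₁ τ)
    have := (curve_deriv hD (hx₁ τ hτT)).sub (curve_deriv hD' (hx₁ τ hτT))
    refine this.congr_deriv ?_
    have s1 := hsys_r τ hτT (x₁ τ)
    have s2 := hsys_l τ hτT (x₁ τ)
    rw [hv, hv']
    simp only [hedef]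
    linarith
  have hBd : ∀ τ ∈ Ioo 0 t, HasDerivAt (fun τ => Afun lam τ * g τ)
      (lam/2 * Afun lam τ * g τ + 2 * qfun lam r l τ (x₁ τ)) τ := by
    intro τ hτ
    have h1 : HasDerivAt g (-(wfun (e τ) * (-2 * kfun (e τ) * deriv (fun y => l τ y) (x₁ τ)))) τ :=
      (((Gfun_deriv (e τ)).comp τ (hed τ hτ))).const_sub _
    refine ((Afun_deriv lam τ).mul h1).congr_deriv ?_
    have h2 : wfun (e τ) * kfun (e τ) = Real.sqrt (kfun (e τ)) := by
      rw [wfun, one_div, inv_mul_eq_div, Real.div_sqrt]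
    have h3 : qfun lam r l τ (x₁ τ)
      = Afun lam τ * Real.sqrt (kfun (e τ)) * deriv (fun y => l τ y) (x₁ τ) := rfl
    rw [h3, ← h2]; ring
  have hAg : ContinuousOn (fun τ => lam/2 * Afun lam τ * g τ) (Icc 0 t) :=
    ((continuous_const.mul (Afun_cont lam)).continuousOn).mul hgc
  have hAgi : IntervalIntegrable (fun τ => lam/2 * Afun lam τ * g τ) volume 0 t := by
    apply ContinuousOn.intervalIntegrable
    rwa [uIcc_of_le ht0]
  have hFTC := intervalIntegral.integral_eq_sub_of_hasDerivAt_of_le ht0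
    ((Afun_cont lam).continuousOn.mul hgc) hBd (hAgi.add (hint.const_mul 2))
  rw [intervalIntegral.integral_add hAgi (hint.const_mul 2),
    intervalIntegral.integral_const_mul] at hFTC
  have he0 : e 0 = 2 * M := by
    simp only [hedef, etafun, hx₁0, hr0, hl0]; ring
  have hg0 : g 0 = 0 := by simp [hgdef, he0]
  -- upper bound for the integral of A' g
  have hwd : 0 ≤ wfun eL * (M - m) := mul_nonneg (wfun_pos _).le (by linarith)
  have hub : ∫ τ in (0:ℝ)..t, lam/2 * Afun lam τ * g τ
      ≤ wfun eL * (M - m) * (2 * (Afun lam t - 1) - lam * t / 2) := by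
    have hc2 : Continuous (fun τ => wfun eL * (M - m) * (2 * (lam/2 * Afun lam τ) - lam / 2)) := by
      have := Afun_cont lam
      fun_prop
    have h1 := intervalIntegral.integral_mono_on ht0 (μ := volume) hAgi
      (hc2.intervalIntegrable 0 t) (by
        intro τ hτ
        have b1 := (Gfun_bounds (heL0.trans (hlow2 τ hτ)) (hupp τ hτ)).2
        have b2 := wfun_anti heL0 (hlow2 τ hτ)
        have b3 := hlow τ hτ
        have b4 := hupp τ hτ
        have b5 : g τ ≤ wfun eL * ((M - m) * (2 - (Afun lam τ)⁻¹)) := by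
          calc g τ ≤ wfun (e τ) * (2 * M - e τ) := b1
            _ ≤ wfun eL * (2 * M - e τ) := mul_le_mul_of_nonneg_right b2 (by linarith)
            _ ≤ _ := mul_le_mul_of_nonneg_left (by linarith) (wfun_pos _).le
        have b6 : 0 ≤ lam/2 * Afun lam τ := by have := hApos τ; positivity
        calc lam/2 * Afun lam τ * g τ
            ≤ lam/2 * Afun lam τ * (wfun eL * ((M - m) * (2 - (Afun lam τ)⁻¹))) :=
              mul_le_mul_of_nonneg_left b5 b6
          _ = _ := by
              have := (hApos τ).ne'
              field_simp)
    refine h1.trans (le_of_eq ?_)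
    rw [intervalIntegral.integral_eq_sub_of_hasDerivAt
      (f := fun τ => wfun eL * (M - m) * (2 * Afun lam τ - lam / 2 * τ))
      (fun τ _ => ?_) (hc2.intervalIntegrable 0 t)]
    · simp only [Afun_zero]; ring
    · have := ((((Afun_deriv lam τ).const_mul 2).sub
        ((hasDerivAt_id τ).const_mul (lam/2))).const_mul (wfun eL * (M - m)))
      refine this.congr_deriv ?_
      ring
  have htm := right_mem_Icc.2 ht0
  have hlb : wfun (2 * M) * (M - m) ≤ Afun lam t * g t := by
    have b1 := (Gfun_bounds (heL0.trans (hlow2 t htm)) (hupp t htm)).1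
    have b2 := (hE t htm).2
    calc wfun (2 * M) * (M - m) ≤ wfun (2 * M) * (Afun lam t * (2 * M - e t)) :=
          mul_le_mul_of_nonneg_left (by linarith) (wfun_pos _).le
      _ = Afun lam t * (wfun (2 * M) * (2 * M - e t)) := by ring
      _ ≤ _ := mul_le_mul_of_nonneg_left b1 (hApos t).le
  have hac : wfun (2 * M) ≤ wfun eL := wfun_anti heL0 ((hlow2 t htm).trans (hupp t htm))
  have hcond' : 2 * (Afun lam t - 1) * wfun eL ≤ (2 - (Afun lam t)⁻¹) * wfun (2 * M) := by
    unfold wfun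
    rw [div_eq_mul_one_div, div_eq_mul_one_div (2 - (Afun lam t)⁻¹)] at hcond
    linarith
  have hexp : 1 - (Afun lam t)⁻¹ ≤ lam * t / 2 := by
    have := Real.add_one_le_exp (-(lam * t / 2))
    rw [Real.exp_neg] at this
    unfold Afun
    linarith
  have hlt : 0 ≤ lam * t / 2 := by positivity
  have hfin : wfun eL * (2 * (Afun lam t - 1) - lam * t / 2) ≤ wfun (2 * M) := by
    have p1 := mul_le_mul_of_nonneg_right hexp (wfun_pos (2 * M)).le
    have p2 := mul_le_mul_of_nonneg_left hac hlt
    linarith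
  have hfin2 := mul_le_mul_of_nonneg_right hfin (sub_nonneg.2 hmM)
  rw [Pi.mul_apply, Pi.mul_apply, hg0] at hFTC
  linarith

/-- whenever the selection inequality holds at time `t`, the integral
of the weighted Riemann derivative `q` along the forward characteristic has sign
opposite to `r₀'(α)`. -/
theorem integral_of_q_sign_along_forward_characteristic
    (lam T : ℝ) (hlam : 0 < lam)
    (r l : ℝ → ℝ → ℝ) (r₀ : ℝ → ℝ) (rinf : ℝ)
    (hreg_r : ContDiffOn ℝ 1 (Function.uncurry r) (Set.Ico 0 T ×ˢ (Set.univ : Set ℝ)))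
    (hreg_l : ContDiffOn ℝ 1 (Function.uncurry l) (Set.Ico 0 T ×ˢ (Set.univ : Set ℝ)))
    (hsys_r : ∀ t ∈ Set.Ico (0:ℝ) T, ∀ x : ℝ,
      deriv (fun s => r s x) t + kfun (etafun r l t x) * deriv (fun y => r t y) x
        = -(lam/2) * (r t x + l t x))
    (hsys_l : ∀ t ∈ Set.Ico (0:ℝ) T, ∀ x : ℝ,
      deriv (fun s => l s x) t - kfun (etafun r l t x) * deriv (fun y => l t y) x
        = -(lam/2) * (r t x + l t x))
    (hr0 : ∀ x : ℝ, r 0 x = r₀ x)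
    (hl0 : ∀ x : ℝ, l 0 x = -r₀ x)
    (hr₀reg : ContDiff ℝ 1 r₀)
    (hr₀bdd : ∃ C : ℝ, ∀ x : ℝ, |r₀ x| ≤ C)
    (hrinf : Filter.Tendsto r₀ Filter.atTop (nhds rinf))
    (hetabdd : ∀ t ∈ Set.Ico (0:ℝ) T, ∀ x y : ℝ,
      |r t x - l t y| ≤ 2 * ⨆ z : ℝ, |r₀ z|)
    -- the forward characteristic starting from α and the backward characteristic flow
    (α : ℝ) (x₁ : ℝ → ℝ) (x₂ : ℝ → ℝ → ℝ)
    (hx₁0 : x₁ 0 = α)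
    (hx₁ : ∀ t ∈ Set.Ico (0:ℝ) T,
      HasDerivAt x₁ (kfun (etafun r l t (x₁ t))) t)
    (hflowreg₂ : ContDiffOn ℝ 1 (Function.uncurry x₂) (Set.Ico 0 T ×ˢ (Set.univ : Set ℝ)))
    (hx₂0 : ∀ b : ℝ, x₂ 0 b = b)
    (hx₂ : ∀ b : ℝ, ∀ t ∈ Set.Ico (0:ℝ) T,
      HasDerivAt (fun s => x₂ s b) (-(kfun (etafun r l t (x₂ t b)))) t)
    -- the correspondence map t ↦ β(t,α)
    (bmap : ℝ → ℝ)
    (hbmapreg : ContDiffOn ℝ 1 bmap (Set.Ico 0 T))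
    (hbmap : ∀ t ∈ Set.Ico (0:ℝ) T, x₁ t = x₂ t (bmap t))
    -- conditions (69) on the initial profile at α
    (hcond₁ : deriv r₀ α * (r₀ α + rinf) < 0)
    (hcond₂ : ∀ x : ℝ, α ≤ x → deriv r₀ x * r₀ α < 0)
    -- the additional sign condition
    (hcond₃ : 0 < r₀ α * rinf ∨ rinf = 0)
    -- the function η_L
    (etaL : ℝ → ℝ)
    (hetaL : ∀ t : ℝ, etaL t = (Afun lam t)⁻¹ * (r₀ (bmap t) + r₀ α)
      + 2 * r₀ (bmap t) * (1 - (Afun lam t)⁻¹)) :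
    ∀ t ∈ Set.Ico (0:ℝ) T,
      (0 ≤ -2 * (Afun lam t - 1) / Real.sqrt (kfun (etaL t))
          + (2 - (Afun lam t)⁻¹) / Real.sqrt (kfun (2 * r₀ α))) →
      deriv r₀ α * (∫ τ in (0:ℝ)..t, qfun lam r l τ (x₁ τ)) ≤ 0 := by
  have hdiff : Differentiable ℝ r₀ := hr₀reg.differentiable (by norm_num)
  intro t ht hc
  have hne : r₀ α ≠ 0 := by
    intro h
    have := hcond₂ α le_rfl
    rw [h] at this
    simp at this
  rcases lt_or_gt_of_ne hne with hneg | hpos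
  · -- negative case: apply the core lemma to `(-r, -l)`
    have hd : ∀ x, α ≤ x → 0 < deriv r₀ x := fun x hx =>
      pos_of_mul_neg_left (hcond₂ x hx) hneg.le
    have hmono : MonotoneOn r₀ (Ici α) :=
      monotoneOn_of_deriv_nonneg (convex_Ici α) hdiff.continuous.continuousOn
        hdiff.differentiableOn (fun x hx => (hd x (interior_subset hx)).le)
    have hrle : rinf ≤ 0 := by
      rcases hcond₃ with h | h
      · exact (neg_of_mul_pos_right h hneg.le).le
      · exact h.le
    have hnn : ∀ x, α ≤ x → r₀ x ≤ 0 := by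
      intro x hx
      refine le_trans (ge_of_tendsto hrinf ?_) hrle
      filter_upwards [eventually_ge_atTop x] with y hy
      exact hmono hx (hx.trans hy) hy
    have heta : ∀ a y, etafun (fun a y => -r a y) (fun a y => -l a y) a y = -etafun r l a y := by
      intro a y; simp only [etafun]; ring
    have := core lam T hlam (fun a y => -r a y) (fun a y => -l a y) (fun x => -r₀ x)
      hreg_r.neg hreg_l.neg
      (fun a ha x => by
        have := hsys_r a ha x
        rw [heta, kfun_neg, deriv.fun_neg, deriv.fun_neg]
        linarith)
      (fun a ha x => by
        have := hsys_l a ha x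
        rw [heta, kfun_neg, deriv.fun_neg, deriv.fun_neg]
        linarith)
      (fun x => by rw [hr0]) (fun x => by rw [hl0]) α x₁ x₂ hx₁0
      (fun a ha => by rw [heta, kfun_neg]; exact hx₁ a ha) hx₂0
      (fun b a ha => by rw [heta, kfun_neg]; exact hx₂ b a ha)
      bmap hbmapreg.continuousOn hbmap
      (fun x hx y hy hxy => neg_le_neg (hmono hx hy hxy))
      (fun x hx => neg_nonneg.2 (hnn x hx)) t ht (-etaL t)
      (by rw [hetaL]; ring)
      (by
        rw [kfun_neg, mul_neg, kfun_neg]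
        exact hc)
    have hq : ∀ τ, qfun lam (fun a y => -r a y) (fun a y => -l a y) τ (x₁ τ)
        = -qfun lam r l τ (x₁ τ) := by
      intro τ
      simp only [qfun]
      rw [heta, kfun_neg, deriv.fun_neg]; ring
    simp only [hq, intervalIntegral.integral_neg] at this
    exact mul_nonpos_of_nonneg_of_nonpos (hd α le_rfl).le (by linarith)
  · have hd : ∀ x, α ≤ x → deriv r₀ x < 0 := fun x hx =>
      neg_of_mul_neg_left (hcond₂ x hx) hpos.le
    have hanti : AntitoneOn r₀ (Ici α) :=
      antitoneOn_of_deriv_nonpos (convex_Ici α) hdiff.continuous.continuousOn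
        hdiff.differentiableOn (fun x hx => (hd x (interior_subset hx)).le)
    have hrge : 0 ≤ rinf := by
      rcases hcond₃ with h | h
      · exact (pos_of_mul_pos_right h hpos.le).le
      · exact h.ge
    have hnn : ∀ x, α ≤ x → 0 ≤ r₀ x := by
      intro x hx
      refine hrge.trans (le_of_tendsto hrinf ?_)
      filter_upwards [eventually_ge_atTop x] with y hy
      exact hanti hx (hx.trans hy) hy
    have := core lam T hlam r l r₀ hreg_r hreg_l hsys_r hsys_l hr0 hl0 α x₁ x₂ hx₁0 hx₁ hx₂0 hx₂
      bmap hbmapreg.continuousOn hbmap hanti hnn t ht (etaL t) (hetaL t) hc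
    exact mul_nonpos_of_nonpos_of_nonneg (hd α le_rfl).le this
end
end
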